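/- Let K be a global function field of characteristic p containing a primitive q-th root of unity, where q ≠ p is prime. Fix a, w ∈ K^× with 1 + (a+a^{-1})w^{-1} ≠ 0, and assume that every prime 𝔞_K of K with ord_{𝔞_K} a ≠ 0 satisfies ord_{𝔞_K} w ≥ 0 and ord_{𝔞_K} w ≡ 0 mod q. Let L = K((1+(a+a^{-1})w^{-1})^{1/q}). Then: (a) if 𝔭_K is a prime of K with ord_{𝔭_K} w < 0 and ord_{𝔭_K} w ≢ 0 mod q, then 𝔭_K splits completely in L, and in particular every prime 𝔭_L of L above 𝔭_K satisfies ord_{𝔭_L} w < 0 and ord_{𝔭_L} w ≢ 0 mod q; (b) every prime 𝔱_L of L satisfies ord_{𝔱_L} a ≡ 0 mod q. -/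

import Mathlib

noncomputable section

/-- A normalized (surjective onto `ℤ`) discrete valuation on a field `K`, i.e. a
"prime" of a global function field. -/
structure FFPrime (K : Type) [Field K] where
  ord : K → WithTop ℤ
  ord_zero : ord 0 = ⊤
  ord_ne_top : ∀ x : K, x ≠ 0 → ord x ≠ ⊤
  ord_one : ord 1 = 0
  ord_mul : ∀ x y : K, ord (x * y) = ord x + ord y
  ord_add : ∀ x y : K, min (ord x) (ord y) ≤ ord (x + y)
  ord_surj : ∀ n : ℤ, ∃ x : K, ord x = (n : WithTop ℤ)

namespace FFPrime

variable {K L : Type} [Field K] [Field L]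

/-- `w` lies over `v` along `φ`, with ramification index `e`. -/
def LiesOverWith (w : FFPrime L) (v : FFPrime K) (φ : K →+* L) (e : ℕ) : Prop :=
  0 < e ∧ ∀ x : K, w.ord (φ x) = ((e : ℤ) : WithTop ℤ) * v.ord x

/-- `w` lies over `v` along `φ`. -/
def LiesOver (w : FFPrime L) (v : FFPrime K) (φ : K →+* L) : Prop :=
  ∃ e : ℕ, w.LiesOverWith v φ e

open Classical in
/-- The ramification index `e(w/v)`. -/
noncomputable def ramIdx (w : FFPrime L) (v : FFPrime K) (φ : K →+* L) : ℕ :=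
  if h : ∃ e : ℕ, w.LiesOverWith v φ e then h.choose else 0

/-- The residue field of `v` has exactly `n` elements. -/
def HasResidueCard (v : FFPrime K) (n : ℕ) : Prop :=
  ∃ s : Finset K, s.card = n ∧ (∀ x ∈ s, 0 ≤ v.ord x) ∧
    (∀ x ∈ s, ∀ y ∈ s, x ≠ y → ¬ 0 < v.ord (x - y)) ∧
    (∀ z : K, 0 ≤ v.ord z → ∃ x ∈ s, 0 < v.ord (z - x))

open Classical in
/-- The residue (relative) degree `f(w/v)`: the unique `f ≥ 1` with
`#κ_w = (#κ_v) ^ f` (residue fields of global function fields are finite). -/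
noncomputable def resDeg (w : FFPrime L) (v : FFPrime K) : ℕ :=
  if h : ∃ f : ℕ, 0 < f ∧ ∃ m n : ℕ, 1 < m ∧ v.HasResidueCard m ∧
      w.HasResidueCard n ∧ n = m ^ f then h.choose else 0

/-- `v` splits completely in the extension given by `φ`: every prime above it has
ramification index and residue degree `1`. -/
def SplitsCompletely (v : FFPrime K) (φ : K →+* L) : Prop :=
  ∀ w : FFPrime L, w.LiesOver v φ → w.ramIdx v φ = 1 ∧ w.resDeg v = 1

/-- `v` is inert in the finite extension `M/K`: there is a unique prime above it, with
ramification index `1` and residue degree `[M : K]`. -/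
def IsInert (v : FFPrime K) (M : Type) [Field M] [Algebra K M] : Prop :=
  (∃! w : FFPrime M, w.LiesOver v (algebraMap K M)) ∧
    ∀ w : FFPrime M, w.LiesOver v (algebraMap K M) →
      w.ramIdx v (algebraMap K M) = 1 ∧ w.resDeg v = Module.finrank K M

/-- `v` ramifies in the extension given by `φ`: some prime above it has ramification
index `> 1`. -/
def Ramifies (v : FFPrime K) (φ : K →+* L) : Prop :=
  ∃ w : FFPrime L, w.LiesOver v φ ∧ 2 ≤ w.ramIdx v φ

/-- `ord_v z ≡ 0 mod q`. -/
def OrdDvd (v : FFPrime K) (q : ℕ) (z : K) : Prop :=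
  ∃ n : ℤ, v.ord z = (((q : ℤ) * n : ℤ) : WithTop ℤ)

end FFPrime

/-- A nontrivial (rank one) valuation on a possibly infinite algebraic extension of a
global function field, with values in `ℚ ∪ {∞}`. -/
structure FFVal (B : Type) [Field B] where
  ord : B → WithTop ℚ
  ord_zero : ord 0 = ⊤
  ord_ne_top : ∀ x : B, x ≠ 0 → ord x ≠ ⊤
  ord_one : ord 1 = 0
  ord_mul : ∀ x y : B, ord (x * y) = ord x + ord y
  ord_add : ∀ x y : B, min (ord x) (ord y) ≤ ord (x + y)
  nontrivial : ∃ x : B, ord x ≠ 0 ∧ ord x ≠ ⊤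

/-- The valuation `V` of the big field restricts, up to a normalization factor `c`, to
the (normalized discrete) prime `v` of `K` along `φ`; i.e. `v` is the prime of `K`
lying below `V`. -/
def FFVal.RestrictsTo {K B : Type} [Field K] [Field B] (V : FFVal B) (v : FFPrime K)
    (φ : K →+* B) : Prop :=
  ∃ c : ℚ, 0 < c ∧
    ∀ x : K, V.ord (φ x) = ((c : ℚ) : WithTop ℚ) * WithTop.map (fun n : ℤ => (n : ℚ)) (v.ord x)

/-- The algebraic extension `B` of the rational function field `F0 = 𝔽_p(t)` is
`q`-bounded: for every valuation of `B`, the `q`-adic valuations of the ramification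
indices and residue degrees along every finite subextension are bounded. -/
def IsQBounded (q : ℕ) (F0 B : Type) [Field F0] [Field B] [Algebra F0 B] : Prop :=
  ∀ V : FFVal B, ∃ C : ℕ,
    ∀ L : IntermediateField F0 B, FiniteDimensional F0 L →
      ∀ v0 : FFPrime F0, ∀ vL : FFPrime L,
        V.RestrictsTo v0 (algebraMap F0 B) →
        V.RestrictsTo vL L.val.toRingHom →
        padicValNat q (vL.ramIdx v0 (algebraMap F0 L)) ≤ C ∧
        padicValNat q (vL.resDeg v0) ≤ C

/-- The prime `v` of `K` has uniformly `q`-bounded ramification in `B`. -/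
def UnifQBoundedRam (q : ℕ) {K : Type} [Field K] (B : Type) [Field B] [Algebra K B]
    (v : FFPrime K) : Prop :=
  ∃ C : ℕ, ∀ F : IntermediateField K B, FiniteDimensional K F →
    ∀ w : FFPrime F, w.LiesOver v (algebraMap K F) →
      padicValNat q (w.ramIdx v (algebraMap K F)) ≤ C

/-- The prime `v` of `K` has uniformly absolutely bounded ramification in `B`. -/
def UnifAbsBoundedRam {K : Type} [Field K] (B : Type) [Field B] [Algebra K B]
    (v : FFPrime K) : Prop :=
  ∃ C : ℕ, ∀ F : IntermediateField K B, FiniteDimensional K F →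
    ∀ w : FFPrime F, w.LiesOver v (algebraMap K F) →
      w.ramIdx v (algebraMap K F) ≤ C

/-- The prime `v` of `K` has uniformly `q`-bounded relative (residue) degree in `B`. -/
def UnifQBoundedRes (q : ℕ) {K : Type} [Field K] (B : Type) [Field B] [Algebra K B]
    (v : FFPrime K) : Prop :=
  ∃ C : ℕ, ∀ F : IntermediateField K B, FiniteDimensional K F →
    ∀ w : FFPrime F, w.LiesOver v (algebraMap K F) →
      padicValNat q (w.resDeg v) ≤ C

/-- The prime `v` of `K` is uniformly `q`-bounded in `B`. -/
def UniformlyQBoundedAt (q : ℕ) {K : Type} [Field K] (B : Type) [Field B] [Algebra K B]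
    (v : FFPrime K) : Prop :=
  UnifQBoundedRam q B v ∧ UnifQBoundedRes q B v

/-- The integral closure in `B` of the valuation ring `O_v = {x ∈ K : ord_v x ≥ 0}`. -/
def valIntegralClosure {K : Type} [Field K] (v : FFPrime K) (B : Type) [Field B]
    [Algebra K B] : Set B :=
  {x : B | ∃ P : Polynomial K, P.Monic ∧ (∀ n : ℕ, 0 ≤ v.ord (P.coeff n)) ∧
    Polynomial.aeval x P = 0}

/-- The integral closure in `B` of the ring `O_{K,S}` of `S`-integers of `K`. -/
def sIntegralClosure {K : Type} [Field K] (S : Set (FFPrime K)) (B : Type) [Field B]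
    [Algebra K B] : Set B :=
  {x : B | ∃ P : Polynomial K, P.Monic ∧
    (∀ n : ℕ, ∀ v : FFPrime K, v ∉ S → 0 ≤ v.ord (P.coeff n)) ∧
    Polynomial.aeval x P = 0}

/-- Elements of `B` that are units at every prime of `B` lying over a prime of `S`. -/
def unitsAtS {K : Type} [Field K] (S : Set (FFPrime K)) (B : Type) [Field B]
    [Algebra K B] : Set B :=
  {x : B | ∀ V : FFVal B, (∃ v ∈ S, V.RestrictsTo v (algebraMap K B)) → V.ord x = 0}

/-- Elements `x` of `B` with `ord (x - 1) > 0` at every prime of `B` lying over a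
prime of `S`. -/
def onesAtS {K : Type} [Field K] (S : Set (FFPrime K)) (B : Type) [Field B]
    [Algebra K B] : Set B :=
  {x : B | ∀ V : FFVal B, (∃ v ∈ S, V.RestrictsTo v (algebraMap K B)) → 0 < V.ord (x - 1)}

/-- A subset of a commutative ring is first-order definable in the language of rings
`{0, 1, +, ·}` with parameters from the ring. -/
def FODefinable {R : Type} [CommRing R] (X : Set R) : Prop :=
  letI : FirstOrder.Ring.CompatibleRing R := FirstOrder.Ring.compatibleRingOfRing R
  Set.Definable₁ (Set.univ : Set R) FirstOrder.Language.ring X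

/-- A subset of a commutative ring is existentially (diophantine) definable: it is cut
out by a block of existential quantifiers followed by a system of polynomial equations,
with parameters (coefficients) from the ring. -/
def ExistDefinable {R : Type} [CommRing R] (X : Set R) : Prop :=
  ∃ (k m : ℕ) (P : Fin m → MvPolynomial (Fin (k + 1)) R),
    ∀ x : R, x ∈ X ↔ ∃ y : Fin k → R, ∀ i : Fin m,
      MvPolynomial.eval (Fin.cons x y) (P i) = 0

/-- Solvability of the norm equation `N(y) = b·x^q + b^q` over (every realization of)
the tower `L₂(a^{1/q})/L₂`, where `L₁ = F((1+(b x^q+b^q)⁻¹)^{1/q})` and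
`L₂ = L₁((1+(a+a⁻¹)b⁻¹)^{1/q})`. -/
def NormTower2Solvable (q : ℕ) (F : Type) [Field F] (a b x : F) : Prop :=
  ∀ (M1 : Type) [Field M1] [Algebra F M1] (α1 : M1),
    α1 ^ q = algebraMap F M1 (1 + (b * x ^ q + b ^ q)⁻¹) →
    IntermediateField.adjoin F {α1} = ⊤ →
    ∀ (M2 : Type) [Field M2] [Algebra M1 M2] (α2 : M2),
      α2 ^ q = algebraMap M1 M2 (algebraMap F M1 (1 + (a + a⁻¹) * b⁻¹)) →
      IntermediateField.adjoin M1 {α2} = ⊤ →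
      ∀ (M3 : Type) [Field M3] [Algebra M2 M3] (α3 : M3),
        α3 ^ q = algebraMap M2 M3 (algebraMap M1 M2 (algebraMap F M1 a)) →
        IntermediateField.adjoin M2 {α3} = ⊤ →
        ∃ y : M3, Algebra.norm M2 y = algebraMap M1 M2 (algebraMap F M1 (b * x ^ q + b ^ q))

/-- Solvability of the norm equation `N(y) = b·x^q + b^q` over (every realization of)
the tower `L₄(a^{1/q})/L₄`, where `L₁ = F((1+(b x^q+b^q)⁻¹)^{1/q})`,
`L₃ = L₁((1+x⁻¹)^{1/q})` and `L₄ = L₃((1+(a+a⁻¹)x⁻¹)^{1/q})`. -/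
def NormTower4Solvable (q : ℕ) (F : Type) [Field F] (a b x : F) : Prop :=
  ∀ (M1 : Type) [Field M1] [Algebra F M1] (α1 : M1),
    α1 ^ q = algebraMap F M1 (1 + (b * x ^ q + b ^ q)⁻¹) →
    IntermediateField.adjoin F {α1} = ⊤ →
    ∀ (M3 : Type) [Field M3] [Algebra M1 M3] (α3 : M3),
      α3 ^ q = algebraMap M1 M3 (algebraMap F M1 (1 + x⁻¹)) →
      IntermediateField.adjoin M1 {α3} = ⊤ →
      ∀ (M4 : Type) [Field M4] [Algebra M3 M4] (α4 : M4),
        α4 ^ q = algebraMap M3 M4 (algebraMap M1 M3 (algebraMap F M1 (1 + (a + a⁻¹) * x⁻¹))) →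
        IntermediateField.adjoin M3 {α4} = ⊤ →
        ∀ (M5 : Type) [Field M5] [Algebra M4 M5] (α5 : M5),
          α5 ^ q = algebraMap M4 M5 (algebraMap M3 M4 (algebraMap M1 M3 (algebraMap F M1 a))) →
          IntermediateField.adjoin M4 {α5} = ⊤ →
          ∃ y : M5, Algebra.norm M4 y =
            algebraMap M3 M4 (algebraMap M1 M3 (algebraMap F M1 (b * x ^ q + b ^ q)))

/-- Unsolvability of the norm equation `N(y) = b·x^q + b^q` over (every realization of)
the tower `L₄(a^{1/q})/L₄` as in `NormTower4Solvable`. -/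
def NormTower4Unsolvable (q : ℕ) (F : Type) [Field F] (a b x : F) : Prop :=
  ∀ (M1 : Type) [Field M1] [Algebra F M1] (α1 : M1),
    α1 ^ q = algebraMap F M1 (1 + (b * x ^ q + b ^ q)⁻¹) →
    IntermediateField.adjoin F {α1} = ⊤ →
    ∀ (M3 : Type) [Field M3] [Algebra M1 M3] (α3 : M3),
      α3 ^ q = algebraMap M1 M3 (algebraMap F M1 (1 + x⁻¹)) →
      IntermediateField.adjoin M1 {α3} = ⊤ →
      ∀ (M4 : Type) [Field M4] [Algebra M3 M4] (α4 : M4),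
        α4 ^ q = algebraMap M3 M4 (algebraMap M1 M3 (algebraMap F M1 (1 + (a + a⁻¹) * x⁻¹))) →
        IntermediateField.adjoin M3 {α4} = ⊤ →
        ∀ (M5 : Type) [Field M5] [Algebra M4 M5] (α5 : M5),
          α5 ^ q = algebraMap M4 M5 (algebraMap M3 M4 (algebraMap M1 M3 (algebraMap F M1 a))) →
          IntermediateField.adjoin M4 {α5} = ⊤ →
          ¬ ∃ y : M5, Algebra.norm M4 y =
            algebraMap M3 M4 (algebraMap M1 M3 (algebraMap F M1 (b * x ^ q + b ^ q)))

/-!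
At a prime `v` with `ord w < 0` the element `c = 1 + (a + a⁻¹) w⁻¹` is congruent to `1`, so at a
prime `u` above `v` the root `α` of `X ^ q = c` is congruent to a root of unity `ξ ∈ K`. Because
`p ^ n ≡ 1 mod q` for arbitrarily large `n`, Frobenius turns this congruence into approximations of
`α` by elements of `K` of any prescribed order: `K` is `u`-adically dense in `L`, which forces
ramification index and residue degree `1`.

The residue degree is only meaningful for finite residue fields. These are finite because `K` is
finite over some `k(s)` with `ord s > 0`, and a `k`-independent family of residues lifts to a
`k(s)`-independent family in `K`, as is seen by specializing a relation at `s = 0`.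

For the orders of `a` in `L`, compare both sides of `α ^ q * w = w + a + a⁻¹` at a pole of `a` or of
`a⁻¹`: the right-hand side has the order of that pole.
-/

lemma nsmul_top {Γ : Type*} [LinearOrderedAddCommMonoidWithTop Γ] {e : ℕ} (he : 0 < e) :
    e • (⊤ : Γ) = ⊤ := by
  obtain ⟨e, rfl⟩ := Nat.exists_eq_add_one_of_ne_zero he.ne'
  rw [succ_nsmul, add_top]

lemma withTop_nsmul_strictMono {e : ℕ} (he : 0 < e) : StrictMono fun n : WithTop ℤ ↦ e • n := by
  intro m n hmn
  lift m to ℤ using hmn.ne_top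
  cases n with
  | top => simpa only [nsmul_top he, WithTop.coe_nsmul] using WithTop.coe_lt_top (e • m)
  | coe n =>
    exact WithTop.coe_lt_coe.2 (nsmul_right_strictMono he.ne' (WithTop.coe_lt_coe.1 hmn))

lemma withTop_natCast_mul_eq_nsmul {e : ℕ} (he : 0 < e) (n : WithTop ℤ) :
    ((e : ℤ) : WithTop ℤ) * n = e • n := by
  cases n with
  | top => rw [nsmul_top he, WithTop.mul_top (by exact_mod_cast he.ne')]
  | coe n => rw [← WithTop.coe_mul, ← WithTop.coe_nsmul, nsmul_eq_mul]

lemma withTop_one_le_of_pos {x : WithTop ℤ} (hx : 0 < x) : ((1 : ℤ) : WithTop ℤ) ≤ x := by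
  cases x with
  | top => exact le_top
  | coe n => exact WithTop.coe_le_coe.2 (WithTop.coe_pos.1 hx)

lemma linearIndependent_of_forall_dvd {A M ι : Type*} [CommRing A] [IsDomain A] [WfDvdMonoid A]
    [AddCommGroup M] [Module A M] [Module.IsTorsionFree A M] {ϖ : A} (hϖ : ϖ ≠ 0)
    (hunit : ¬IsUnit ϖ) {x : ι → M}
    (hdvd : ∀ (t : Finset ι) (c : ι → A), ∑ i ∈ t, c i • x i = 0 → ∀ i ∈ t, ϖ ∣ c i) :
    LinearIndependent A x := by
  rw [linearIndependent_iff']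
  intro t c hc i hi
  have hpow (n : ℕ) : ∃ d : ι → A, (∀ i ∈ t, c i = ϖ ^ n * d i) ∧ ∑ i ∈ t, d i • x i = 0 := by
    induction n with
    | zero => exact ⟨c, fun i _ ↦ by rw [pow_zero, one_mul], hc⟩
    | succ n ih =>
      obtain ⟨d, hcd, hd⟩ := ih
      choose! d' hd' using hdvd t d hd
      refine ⟨d', fun i hi ↦ by rw [hcd i hi, hd' i hi, pow_succ, mul_assoc], ?_⟩
      have hsum : ϖ • ∑ i ∈ t, d' i • x i = 0 := by
        rw [← hd, Finset.smul_sum]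
        exact Finset.sum_congr rfl fun i hi ↦ by rw [smul_smul, ← hd' i hi]
      exact (smul_eq_zero.1 hsum).resolve_left hϖ
  by_contra hci
  obtain ⟨n, hn⟩ := FiniteMultiplicity.of_not_isUnit hunit hci
  obtain ⟨d, hcd, -⟩ := hpow (n + 1)
  exact hn ⟨d i, hcd i hi⟩

section Specialization

open Polynomial

variable {k O κ : Type*} [Field k] [CommRing O] [Algebra k[X] O] [CommRing κ] [Algebra k κ]
  {ρ : O →+* κ}

lemma linearIndependent_polynomial_of_map [Module.IsTorsionFree k[X] O]
    (hρ : ∀ f : k[X], ρ (algebraMap k[X] O f) = algebraMap k κ (f.coeff 0)) {ι : Type*}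
    {x : ι → O} (hx : LinearIndependent k (ρ ∘ x)) : LinearIndependent k[X] x := by
  refine linearIndependent_of_forall_dvd X_ne_zero not_isUnit_X fun t c hc i hi ↦ ?_
  rw [X_dvd_iff]
  refine linearIndependent_iff'.1 hx t (fun i ↦ (c i).coeff 0) ?_ i hi
  simpa only [Algebra.smul_def, map_sum, map_mul, hρ, map_zero, Function.comp_apply]
    using congrArg ρ hc

lemma finite_of_surjective_of_finiteDimensional_ratFunc {K : Type*} [Field K] [Algebra k[X] K]
    [Algebra (RatFunc k) K] [IsScalarTower k[X] (RatFunc k) K] [FiniteDimensional (RatFunc k) K]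
    [Algebra O K] [IsScalarTower k[X] O K] [FaithfulSMul O K]
    (hρ : ∀ f : k[X], ρ (algebraMap k[X] O f) = algebraMap k κ (f.coeff 0))
    (hsurj : Function.Surjective ρ) : Module.Finite k κ := by
  have hK : Function.Injective (algebraMap k[X] K) := by
    rw [IsScalarTower.algebraMap_eq k[X] (RatFunc k) K]
    exact (algebraMap (RatFunc k) K).injective.comp (IsFractionRing.injective k[X] (RatFunc k))
  have : IsDomain O := (FaithfulSMul.algebraMap_injective O K).isDomain
  have : Module.IsTorsionFree k[X] O := by
    rw [Module.isTorsionFree_iff_algebraMap_injective]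
    rw [IsScalarTower.algebraMap_eq k[X] O K, RingHom.coe_comp] at hK
    exact hK.of_comp
  let b := Module.Free.chooseBasis k κ
  obtain ⟨x, hx⟩ : ∃ x, ρ ∘ x = b := hsurj.comp_left b
  have hO : LinearIndependent k[X] x :=
    linearIndependent_polynomial_of_map hρ (hx ▸ b.linearIndependent)
  have hOK : LinearIndependent k[X] (algebraMap O K ∘ x) :=
    hO.map_injOn (IsScalarTower.toAlgHom k[X] O K).toLinearMap
      (FaithfulSMul.algebraMap_injective O K).injOn
  have := ((LinearIndependent.iff_fractionRing k[X] (RatFunc k)).1 hOK).finite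
  exact Module.Finite.of_basis b

end Specialization

open IntermediateField in
lemma exists_ratFunc_finite_map_X {k : Type*} [Field k] {s : RatFunc k}
    (hs : ¬∃ c, s = RatFunc.C c) :
    ∃ σ : RatFunc k →+* RatFunc k, σ.Finite ∧ σ RatFunc.X = s := by
  let σ := RatFunc.algEquivOfTranscendental s (RatFunc.transcendental_of_ne_C s hs)
  have hfin : Module.Finite k⟮s⟯ (RatFunc k) := by
    refine Module.finite_of_finrank_pos (Nat.pos_of_ne_zero ?_)
    rwa [RatFunc.finrank_eq_max_natDegree, Ne, Nat.max_eq_zero_iff, ← RatFunc.eq_C_iff]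
  exact ⟨(algebraMap k⟮s⟯ (RatFunc k)).comp (σ : RatFunc k →+* k⟮s⟯),
    .comp (RingHom.finite_algebraMap.2 hfin) (.of_surjective _ σ.surjective),
    RatFunc.algEquivOfTranscendental_X s _⟩

lemma exists_le_pow_eq_one_add_mul {p q : ℕ} (hp : 1 < p) (hq : 0 < q) (hpq : p.Coprime q)
    (N : ℕ) : ∃ n k : ℕ, N ≤ p ^ n ∧ p ^ n = 1 + q * k := by
  have hmod : p ^ (q.totient * N) ≡ 1 [MOD q] := by
    simpa only [pow_mul, one_pow] using (Nat.ModEq.pow_totient hpq).pow N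
  obtain ⟨k, hk⟩ := (Nat.modEq_iff_dvd' (Nat.one_le_pow _ _ (by lia))).1 hmod.symm
  refine ⟨q.totient * N, k, ?_, ?_⟩
  · exact (Nat.le_mul_of_pos_left N (Nat.totient_pos.2 hq)).trans (Nat.lt_pow_self hp).le
  · rw [← hk, Nat.add_sub_cancel' (Nat.one_le_pow _ _ (by lia))]

lemma sub_pow_char_pow_of_pow_eq_one {R : Type*} [CommRing R] {p : ℕ} [Fact p.Prime] [CharP R p]
    {α ξ : R} {q : ℕ} (hξ : ξ ^ q = 1) {n k : ℕ} (hnk : p ^ n = 1 + q * k) :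
    (α - ξ) ^ p ^ n = α * (α ^ q) ^ k - ξ := by
  rw [sub_pow_char_pow, hnk, pow_add, pow_add, pow_one, pow_one, pow_mul, pow_mul, hξ, one_pow,
    mul_one]

section SimpleRadical

variable {K L : Type*} [Field K] [Field L] [Algebra K L] {α : L}

lemma isAlgebraic_of_pow_eq {q : ℕ} (hq : 0 < q) {c : K}
    (hα : α ^ q = algebraMap K L c) : IsAlgebraic K α :=
  .of_pow hq (hα ▸ isAlgebraic_algebraMap c)

lemma isAlgebraic_of_adjoin_simple_eq_top (hα : IsAlgebraic K α)
    (hgen : IntermediateField.adjoin K {α} = ⊤) : Algebra.IsAlgebraic K L := by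
  have := IntermediateField.isAlgebraic_adjoin_simple hα.isIntegral
  rw [hgen] at this
  exact IntermediateField.topEquiv.isAlgebraic

end SimpleRadical

namespace FFPrime

open IsLocalRing

variable {K L : Type} [Field K] [Field L] {v : FFPrime K} {u : FFPrime L}

/-- The order function of a prime as an additive valuation. -/
def addValuation (v : FFPrime K) : AddValuation K (WithTop ℤ) :=
  .of v.ord v.ord_zero v.ord_one v.ord_add v.ord_mul

lemma ord_pow (v : FFPrime K) (x : K) (n : ℕ) : v.ord (x ^ n) = n • v.ord x :=
  v.addValuation.map_pow x n

lemma ord_inv (v : FFPrime K) (x : K) : v.ord x⁻¹ = -v.ord x :=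
  v.addValuation.map_inv

lemma ord_eq_zero_of_pow_eq_one {x : K} {n : ℕ} (hn : 0 < n) (hx : x ^ n = 1) :
    v.ord x = 0 := by
  refine (withTop_nsmul_strictMono hn).injective ?_
  simp only [nsmul_zero, ← ord_pow, hx, v.ord_one]

lemma ord_inv_pos_iff {a : K} (ha : a ≠ 0) : 0 < v.ord a⁻¹ ↔ v.ord a < 0 := by
  rw [ord_inv]
  lift v.ord a to ℤ using v.ord_ne_top a ha with n
  exact WithTop.coe_lt_coe.trans (neg_pos.trans WithTop.coe_lt_coe.symm)

lemma ord_inv_neg_iff {a : K} (ha : a ≠ 0) : v.ord a⁻¹ < 0 ↔ 0 < v.ord a := by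
  rw [← ord_inv_pos_iff (inv_ne_zero ha), inv_inv]

/-- The valuation ring of a prime. -/
def valuationSubring (v : FFPrime K) : ValuationSubring K :=
  v.addValuation.toValuation.valuationSubring

lemma residue_eq_zero_iff (x : v.valuationSubring) :
    residue v.valuationSubring x = 0 ↔ 0 < v.ord x :=
  (IsLocalRing.residue_eq_zero_iff x).trans (Valuation.mem_maximalIdeal_iff _ _)

lemma residue_eq_residue_iff (x y : v.valuationSubring) :
    residue v.valuationSubring x = residue v.valuationSubring y ↔ 0 < v.ord (x - y : K) := by
  rw [← sub_eq_zero, ← map_sub, residue_eq_zero_iff]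
  rfl

lemma ord_nonneg_of_isIntegral {R : Type*} [CommRing R] [Algebra R K]
    (hR : ∀ r : R, 0 ≤ v.ord (algebraMap R K r)) {y : K} (hy : IsIntegral R y) :
    0 ≤ v.ord y := by
  let toO : R →+* v.valuationSubring := (algebraMap R K).codRestrict v.valuationSubring hR
  exact (Valuation.valuationSubring.integers v.addValuation.toValuation).mem_of_integral
    (hy.map_of_comp_eq toO (RingHom.id K) rfl)

/-- The additive group of values of a valuation. -/
def valueGroup (f : AddValuation K (WithTop ℤ)) : AddSubgroup ℤ where
  carrier := {n | ∃ x, f x = n}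
  zero_mem' := ⟨1, f.map_one⟩
  add_mem' := by
    rintro m n ⟨x, hx⟩ ⟨y, hy⟩
    exact ⟨x * y, by rw [f.map_mul, hx, hy, WithTop.coe_add]⟩
  neg_mem' := by
    rintro n ⟨x, hx⟩
    exact ⟨x⁻¹, by rw [f.map_inv, hx]; rfl⟩

lemma exists_eq_nsmul_ord (f : AddValuation K (WithTop ℤ)) {x : K} (hx : x ≠ 0) (hfx : f x ≠ 0) :
    ∃ v : FFPrime K, ∃ e : ℕ, 0 < e ∧ ∀ x, f x = e • v.ord x := by
  obtain ⟨d, hd⟩ := Int.subgroup_cyclic (valueGroup f)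
  rw [← AddSubgroup.zmultiples_eq_closure] at hd
  have hmem (n : ℤ) : (∃ x, f x = n) ↔ (d.natAbs : ℤ) ∣ n := by
    rw [Int.natAbs_dvd, ← Int.mem_zmultiples_iff, ← hd]
    rfl
  have hd0 : 0 < d.natAbs := by
    by_contra! hd0
    lift f x to ℤ using f.ne_top_iff.2 hx with n hn
    have := (hmem n).1 ⟨x, hn.symm⟩
    simp_all
  have hdiv (x : K) : ∃ n : WithTop ℤ, f x = d.natAbs • n := by
    by_cases hfx : f x = ⊤
    · exact ⟨⊤, by rw [hfx, nsmul_top hd0]⟩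
    · lift f x to ℤ using hfx with n hn
      obtain ⟨k, hk⟩ := (hmem n).1 ⟨x, hn.symm⟩
      exact ⟨k, by rw [hk, ← WithTop.coe_nsmul, nsmul_eq_mul]⟩
  choose o ho using hdiv
  have ho_iff (x : K) (n : WithTop ℤ) : o x = n ↔ f x = d.natAbs • n := by
    rw [ho x, (withTop_nsmul_strictMono hd0).injective.eq_iff]
  refine ⟨⟨o, ?_, fun x hx ↦ ?_, ?_, fun x y ↦ ?_, fun x y ↦ ?_, fun n ↦ ?_⟩, d.natAbs, hd0, ho⟩
  · rw [ho_iff, f.map_zero, nsmul_top hd0]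
  · rwa [Ne, ho_iff, nsmul_top hd0, f.top_iff]
  · rw [ho_iff, f.map_one, nsmul_zero]
  · rw [ho_iff, f.map_mul, ho x, ho y, nsmul_add]
  · rw [← (withTop_nsmul_strictMono hd0).le_iff_le, (withTop_nsmul_strictMono hd0).monotone.map_min]
    simpa only [ho] using f.map_add x y
  · simp only [ho_iff]
    exact (hmem _).2 ⟨n, nsmul_eq_mul _ _⟩

lemma exists_liesOver [Algebra K L] [Algebra.IsAlgebraic K L] (u : FFPrime L) :
    ∃ v : FFPrime K, u.LiesOver v (algebraMap K L) := by
  obtain ⟨y, hy⟩ := u.ord_surj (-1)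
  obtain ⟨x, hx⟩ : ∃ x : K, u.ord (algebraMap K L x) < 0 := by
    by_contra! hK
    have := ord_nonneg_of_isIntegral hK (Algebra.IsIntegral.isIntegral y)
    rw [hy] at this
    exact absurd (WithTop.coe_le_coe.1 this) (by decide)
  have hx0 : x ≠ 0 := by
    rintro rfl
    simp [u.ord_zero] at hx
  obtain ⟨v, e, he, hv⟩ :=
    exists_eq_nsmul_ord (u.addValuation.comap (algebraMap K L)) hx0 hx.ne
  exact ⟨v, e, he, fun x ↦ (hv x).trans (withTop_natCast_mul_eq_nsmul he _).symm⟩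

section FiniteResidueField

open Polynomial

variable {k : Type} [Field k]

lemma ord_map_eq_zero [Finite k] (v : FFPrime K) (φ : k →+* K) {c : k} (hc : c ≠ 0) :
    v.ord (φ c) = 0 := by
  have := Fintype.ofFinite k
  refine ord_eq_zero_of_pow_eq_one (Nat.sub_pos_of_lt (Fintype.one_lt_card (α := k))) ?_
  rw [← map_pow, FiniteField.pow_card_sub_one_eq_one c hc, map_one]

lemma ord_map_nonneg [Finite k] (v : FFPrime K) (φ : k →+* K) (c : k) : 0 ≤ v.ord (φ c) := by
  obtain rfl | hc := eq_or_ne c 0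
  · simp only [map_zero, v.ord_zero, le_top]
  · exact (v.ord_map_eq_zero φ hc).ge

lemma finite_residueField_of_ord_X_pos [Finite k] {φ : RatFunc k →+* K} (hφ : φ.Finite)
    (v : FFPrime K) (hX : 0 < v.ord (φ RatFunc.X)) : Finite (ResidueField v.valuationSubring) := by
  let := φ.toAlgebra
  have : FiniteDimensional (RatFunc k) K := hφ
  let constants : k →+* v.valuationSubring :=
    (φ.comp RatFunc.C).codRestrict v.valuationSubring (v.ord_map_nonneg _)
  let s : v.valuationSubring := ⟨φ RatFunc.X, hX.le⟩
  let : Algebra k (ResidueField v.valuationSubring) := ((residue _).comp constants).toAlgebra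
  let : Algebra k[X] v.valuationSubring := (eval₂RingHom constants s).toAlgebra
  let : Algebra k[X] K := (φ.comp (algebraMap k[X] (RatFunc k))).toAlgebra
  have : IsScalarTower k[X] (RatFunc k) K := .of_algebraMap_eq' rfl
  have : IsScalarTower k[X] v.valuationSubring K := .of_algebraMap_eq' <| by
    ext c
    · change φ (algebraMap k[X] _ (C c)) = ↑(eval₂ constants s (C c))
      rw [eval₂_C, RatFunc.algebraMap_C]
      rfl
    · change φ (algebraMap k[X] _ X) = ↑(eval₂ constants s X)
      rw [eval₂_X, RatFunc.algebraMap_X]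
  have hres (f : k[X]) : residue _ (algebraMap k[X] v.valuationSubring f) =
      algebraMap k (ResidueField v.valuationSubring) (f.coeff 0) := by
    change residue _ (eval₂ constants s f) = residue _ (constants (f.coeff 0))
    rw [hom_eval₂, (residue_eq_zero_iff s).2 hX, eval₂_at_zero, RingHom.comp_apply]
  have := finite_of_surjective_of_finiteDimensional_ratFunc (K := K) hres residue_surjective
  exact Module.finite_of_finite k

lemma exists_finite_ord_X_pos [Finite k] {φ : RatFunc k →+* K} (hφ : φ.Finite) (v : FFPrime K) :
    ∃ ψ : RatFunc k →+* K, ψ.Finite ∧ 0 < v.ord (ψ RatFunc.X) := by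
  let := φ.toAlgebra
  have : FiniteDimensional (RatFunc k) K := hφ
  obtain ⟨v₀, e, he, hv⟩ := v.exists_liesOver (K := RatFunc k)
  obtain ⟨s, hs⟩ := v₀.ord_surj 1
  have hconst : ¬∃ c, s = RatFunc.C c := by
    rintro ⟨c, rfl⟩
    obtain rfl | hc := eq_or_ne c 0
    · simp [v₀.ord_zero] at hs
    · simp [v₀.ord_map_eq_zero RatFunc.C hc] at hs
  obtain ⟨σ, hσ, hσX⟩ := exists_ratFunc_finite_map_X hconst
  refine ⟨φ.comp σ, hφ.comp hσ, ?_⟩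
  rw [RingHom.comp_apply, hσX, ← φ.algebraMap_toAlgebra, hv, hs, ← WithTop.coe_mul, mul_one]
  exact_mod_cast he

lemma finite_residueField [Finite k] [Algebra (RatFunc k) K] [FiniteDimensional (RatFunc k) K]
    (v : FFPrime K) : Finite (ResidueField v.valuationSubring) := by
  have hφ : (algebraMap (RatFunc k) K).Finite := RingHom.finite_algebraMap.2 ‹_›
  obtain ⟨ψ, hψ, hX⟩ := exists_finite_ord_X_pos hφ v
  exact finite_residueField_of_ord_X_pos hψ v hX

end FiniteResidueField

lemma hasResidueCard_natCard [Finite (ResidueField v.valuationSubring)] :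
    v.HasResidueCard (Nat.card (ResidueField v.valuationSubring)) := by
  classical
  have := Fintype.ofFinite (ResidueField v.valuationSubring)
  obtain ⟨r, hr⟩ := (residue_surjective (R := v.valuationSubring)).hasRightInverse
  have hinj : Function.Injective fun κ ↦ (r κ : K) := Subtype.val_injective.comp hr.injective
  refine ⟨Finset.univ.image fun κ ↦ (r κ : K), ?_, ?_, ?_, fun z hz ↦ ?_⟩
  · rw [Finset.card_image_of_injective _ hinj, Finset.card_univ, Nat.card_eq_fintype_card]
  · simp only [Finset.mem_image, Finset.mem_univ, true_and, forall_exists_index,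
      forall_apply_eq_imp_iff]
    exact fun κ ↦ (r κ).2
  · simp only [Finset.mem_image, Finset.mem_univ, true_and, forall_exists_index,
      forall_apply_eq_imp_iff, hinj.ne_iff]
    intro κ κ' hne hpos
    rw [← hr κ, ← hr κ'] at hne
    exact hne ((residue_eq_residue_iff _ _).2 hpos)
  · refine ⟨_, Finset.mem_image_of_mem _ (Finset.mem_univ (residue _ ⟨z, hz⟩)), ?_⟩
    exact (residue_eq_residue_iff ⟨z, hz⟩ _).1 (hr _).symm

lemma HasResidueCard.natCard_eq {n : ℕ} (h : v.HasResidueCard n) :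
    Nat.card (ResidueField v.valuationSubring) = n := by
  obtain ⟨s, rfl, hnonneg, hsep, hcover⟩ := h
  let red (x : s) : ResidueField v.valuationSubring := residue _ ⟨x, hnonneg x x.2⟩
  have hred : Function.Bijective red := by
    refine ⟨fun x y hxy ↦ ?_, fun κ ↦ ?_⟩
    · by_contra hne
      exact hsep x x.2 y y.2 (Subtype.coe_injective.ne hne) ((residue_eq_residue_iff _ _).1 hxy)
    · obtain ⟨z, rfl⟩ := residue_surjective κ
      obtain ⟨x, hx, hzx⟩ := hcover z z.2
      exact ⟨⟨x, hx⟩, ((residue_eq_residue_iff _ _).2 hzx).symm⟩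
  rw [← Nat.card_congr (Equiv.ofBijective red hred), Nat.card_eq_fintype_card, Fintype.card_coe]

lemma HasResidueCard.one_lt {n : ℕ} (h : v.HasResidueCard n) : 1 < n := by
  have hn : n ≠ 0 := by
    rintro rfl
    obtain ⟨s, hs, -, -, hcover⟩ := h
    obtain ⟨x, hx, -⟩ := hcover 0 (by simp [v.ord_zero])
    simp [Finset.card_eq_zero.1 hs] at hx
  have : Finite (ResidueField v.valuationSubring) :=
    Nat.finite_of_card_ne_zero (h.natCard_eq ▸ hn)
  exact h.natCard_eq ▸ Finite.one_lt_card

lemma resDeg_eq_one {m : ℕ} (hv : v.HasResidueCard m) (hu : u.HasResidueCard m) :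
    u.resDeg v = 1 := by
  have h : ∃ f : ℕ, 0 < f ∧ ∃ m n : ℕ, 1 < m ∧ v.HasResidueCard m ∧ u.HasResidueCard n ∧
      n = m ^ f := ⟨1, one_pos, m, m, hv.one_lt, hv, hu, (pow_one m).symm⟩
  obtain ⟨-, m', n', -, hv', hu', hpow⟩ := h.choose_spec
  rw [resDeg, dif_pos h]
  rw [← hv'.natCard_eq, hv.natCard_eq, ← hu'.natCard_eq, hu.natCard_eq] at hpow
  exact Nat.pow_right_injective hv.one_lt (hpow.symm.trans (pow_one m).symm)

section LiesOver

variable {φ : K →+* L}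

lemma LiesOverWith.ord_map {e : ℕ} (h : u.LiesOverWith v φ e) (x : K) :
    u.ord (φ x) = e • v.ord x :=
  (h.2 x).trans (withTop_natCast_mul_eq_nsmul h.1 _)

lemma LiesOverWith.eq {e e' : ℕ} (h : u.LiesOverWith v φ e) (h' : u.LiesOverWith v φ e') :
    e = e' := by
  obtain ⟨x, hx⟩ := v.ord_surj 1
  have := (h.ord_map x).symm.trans (h'.ord_map x)
  rw [hx, ← WithTop.coe_nsmul, ← WithTop.coe_nsmul] at this
  simpa using WithTop.coe_injective this

lemma LiesOverWith.ramIdx_eq {e : ℕ} (h : u.LiesOverWith v φ e) : u.ramIdx v φ = e := by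
  have hex : ∃ e, u.LiesOverWith v φ e := ⟨e, h⟩
  rw [ramIdx, dif_pos hex]
  exact hex.choose_spec.eq h

lemma LiesOver.ord_pos_iff (h : u.LiesOver v φ) {x : K} : 0 < u.ord (φ x) ↔ 0 < v.ord x := by
  obtain ⟨e, he⟩ := h
  simpa only [he.ord_map, nsmul_zero] using (withTop_nsmul_strictMono he.1).lt_iff_lt (a := 0)

lemma LiesOver.ord_nonneg_iff (h : u.LiesOver v φ) {x : K} :
    0 ≤ u.ord (φ x) ↔ 0 ≤ v.ord x := by
  obtain ⟨e, he⟩ := h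
  simpa only [he.ord_map, nsmul_zero] using (withTop_nsmul_strictMono he.1).le_iff_le (a := 0)

lemma LiesOver.ord_eq_zero_iff (h : u.LiesOver v φ) {x : K} :
    u.ord (φ x) = 0 ↔ v.ord x = 0 := by
  obtain ⟨e, he⟩ := h
  simpa only [he.ord_map, nsmul_zero]
    using (withTop_nsmul_strictMono he.1).injective.eq_iff (b := 0)

lemma LiesOver.ordDvd_map (h : u.LiesOver v φ) {q : ℕ} {x : K} (hx : v.OrdDvd q x) :
    u.OrdDvd q (φ x) := by
  obtain ⟨e, he⟩ := h
  obtain ⟨n, hn⟩ := hx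
  exact ⟨e * n, by rw [he.2, hn, ← WithTop.coe_mul, mul_left_comm]⟩

end LiesOver

section AdicClosure

variable [Algebra K L]

lemma exists_int_le_ord (v : FFPrime K) (x : K) : ∃ n : ℤ, (n : WithTop ℤ) ≤ v.ord x := by
  cases h : v.ord x with
  | top => exact ⟨0, le_top⟩
  | coe n => exact ⟨n, le_rfl⟩

variable (K) in
/-- The `u`-adic closure of `K` in `L`: the elements of `L` that elements of `K` approximate to
any prescribed order at `u`. -/
def adicClosure (u : FFPrime L) : Subalgebra K L where
  carrier := {z | ∀ N : ℤ, ∃ x : K, (N : WithTop ℤ) ≤ u.ord (z - algebraMap K L x)}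
  algebraMap_mem' x N := ⟨x, by rw [sub_self, u.ord_zero]; exact le_top⟩
  add_mem' {z z'} hz hz' N := by
    obtain ⟨x, hx⟩ := hz N
    obtain ⟨x', hx'⟩ := hz' N
    refine ⟨x + x', ?_⟩
    rw [map_add, add_sub_add_comm]
    exact u.addValuation.map_le_add hx hx'
  mul_mem' {z z'} hz hz' N := by
    obtain ⟨b, hb⟩ := u.exists_int_le_ord z'
    obtain ⟨x, hx⟩ := hz (N - b)
    obtain ⟨c, hc⟩ := u.exists_int_le_ord (algebraMap K L x)
    obtain ⟨x', hx'⟩ := hz' (N - c)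
    refine ⟨x * x', ?_⟩
    have hsplit : z * z' - algebraMap K L (x * x') =
        (z - algebraMap K L x) * z' + algebraMap K L x * (z' - algebraMap K L x') := by
      rw [map_mul]
      ring
    rw [hsplit]
    refine u.addValuation.map_le_add ?_ ?_
    · calc (N : WithTop ℤ) = ↑(N - b) + ↑b := by rw [← WithTop.coe_add, sub_add_cancel]
        _ ≤ u.ord (z - algebraMap K L x) + u.ord z' := add_le_add hx hb
        _ = u.ord ((z - algebraMap K L x) * z') := (u.ord_mul _ _).symm
    · calc (N : WithTop ℤ) = ↑c + ↑(N - c) := by rw [← WithTop.coe_add, add_sub_cancel]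
        _ ≤ u.ord (algebraMap K L x) + u.ord (z' - algebraMap K L x') := add_le_add hc hx'
        _ = u.ord (algebraMap K L x * (z' - algebraMap K L x')) := (u.ord_mul _ _).symm

lemma exists_ord_sub_algebraMap_ge (hu : u.adicClosure K = ⊤) (z : L) (N : ℤ) :
    ∃ x : K, (N : WithTop ℤ) ≤ u.ord (z - algebraMap K L x) :=
  (hu ▸ Algebra.mem_top : z ∈ u.adicClosure K) N

lemma liesOverWith_one_of_adicClosure_eq_top (h : u.LiesOver v (algebraMap K L))
    (hu : u.adicClosure K = ⊤) : u.LiesOverWith v (algebraMap K L) 1 := by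
  obtain ⟨e, he⟩ := h
  obtain ⟨y, hy⟩ := u.ord_surj 1
  obtain ⟨x, hx⟩ := exists_ord_sub_algebraMap_ge hu y 2
  have hxy : u.ord y < u.ord (algebraMap K L x - y) := by
    rw [hy]
    refine lt_of_lt_of_le (WithTop.coe_lt_coe.2 one_lt_two) (hx.trans_eq ?_)
    exact u.addValuation.map_sub_swap _ _
  have hx1 : u.ord (algebraMap K L x) = (1 : ℤ) :=
    (u.addValuation.map_eq_of_lt_sub hxy).trans hy
  obtain ⟨n, hn⟩ : ∃ n : ℤ, v.ord x = n := by
    refine (WithTop.ne_top_iff_exists.1 (v.ord_ne_top x ?_)).imp fun _ ↦ Eq.symm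
    rintro rfl
    simp [u.ord_zero] at hx1
  rw [he.2, hn, ← WithTop.coe_mul, WithTop.coe_inj] at hx1
  have : e = 1 := by exact_mod_cast Int.eq_one_of_mul_eq_one_right (Int.natCast_nonneg e) hx1
  exact this ▸ he

lemma HasResidueCard.of_adicClosure_eq_top {n : ℕ} (hv : v.HasResidueCard n)
    (h : u.LiesOver v (algebraMap K L)) (hu : u.adicClosure K = ⊤) : u.HasResidueCard n := by
  classical
  obtain ⟨s, rfl, hnonneg, hsep, hcover⟩ := hv
  refine ⟨s.image (algebraMap K L), Finset.card_image_of_injective _ (algebraMap K L).injective,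
    ?_, ?_, fun z hz ↦ ?_⟩
  · simpa only [Finset.forall_mem_image, h.ord_nonneg_iff] using hnonneg
  · simpa only [Finset.forall_mem_image, ← map_sub, h.ord_pos_iff,
      (algebraMap K L).injective.ne_iff] using hsep
  · obtain ⟨y, hy⟩ := exists_ord_sub_algebraMap_ge hu z 1
    have hzy : 0 < u.ord (z - algebraMap K L y) := lt_of_lt_of_le (by decide) hy
    have hy0 : 0 ≤ v.ord y := by
      rw [← h.ord_nonneg_iff, ← sub_sub_cancel z (algebraMap K L y)]
      exact u.addValuation.map_le_sub hz hzy.le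
    obtain ⟨x, hx, hyx⟩ := hcover y hy0
    refine ⟨_, Finset.mem_image_of_mem _ hx, ?_⟩
    rw [← sub_add_sub_cancel z (algebraMap K L y), ← map_sub]
    exact u.addValuation.map_lt_add hzy (h.ord_pos_iff.2 hyx)

lemma LiesOver.ord_map_of_adicClosure_eq_top (h : u.LiesOver v (algebraMap K L))
    (hu : u.adicClosure K = ⊤) (x : K) : u.ord (algebraMap K L x) = v.ord x := by
  rw [(liesOverWith_one_of_adicClosure_eq_top h hu).ord_map, one_nsmul]

lemma splitsCompletely_of_adicClosure_eq_top [Finite (ResidueField v.valuationSubring)]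
    (hdense : ∀ u : FFPrime L, u.LiesOver v (algebraMap K L) → u.adicClosure K = ⊤) :
    v.SplitsCompletely (algebraMap K L) := by
  intro u h
  have hu : u.HasResidueCard (Nat.card (ResidueField v.valuationSubring)) :=
    hasResidueCard_natCard.of_adicClosure_eq_top h (hdense u h)
  exact ⟨(liesOverWith_one_of_adicClosure_eq_top h (hdense u h)).ramIdx_eq,
    resDeg_eq_one hasResidueCard_natCard hu⟩

variable {q : ℕ} {α : L} {c : K}

lemma adicClosure_eq_top_of_mem (hα : IsAlgebraic K α)
    (hgen : IntermediateField.adjoin K {α} = ⊤) (hmem : α ∈ u.adicClosure K) :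
    u.adicClosure K = ⊤ := by
  rw [IntermediateField.adjoin_simple_eq_top_iff_of_isAlgebraic hα] at hgen
  rwa [eq_top_iff, ← hgen, Algebra.adjoin_le_iff, Set.singleton_subset_iff]

lemma exists_pow_eq_one_ord_sub_pos {ζ : K} (hζ : IsPrimitiveRoot ζ q) (hq : 0 < q)
    (hα : 0 < u.ord (α ^ q - 1)) :
    ∃ ξ : K, ξ ^ q = 1 ∧ 0 < u.ord (α - algebraMap K L ξ) := by
  have hζL := hζ.map_of_injective (algebraMap K L).injective
  by_contra! hξ
  have hroot : ∀ μ ∈ Polynomial.nthRootsFinset q (1 : L), u.ord (α - μ * 1) ≤ 0 := by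
    intro μ hμ
    have := NeZero.of_pos hq
    obtain ⟨i, -, rfl⟩ := hζL.eq_pow_of_pow_eq_one ((Polynomial.mem_nthRootsFinset hq _).1 hμ)
    rw [mul_one, ← map_pow]
    exact hξ _ (by rw [pow_right_comm, hζ.pow_eq_one, one_pow])
  rw [← one_pow (M := L) q, hζL.pow_sub_pow_eq_prod_sub_mul _ _ hq] at hα
  refine hα.not_ge (Finset.prod_induction _ (fun x ↦ u.ord x ≤ 0) (fun x y hx hy ↦ ?_)
    u.ord_one.le hroot)
  rw [u.ord_mul]
  exact add_nonpos hx hy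

-- Since `α * c ^ k - ξ = (α - ξ) ^ p ^ n` when `p ^ n = 1 + q * k`, the element `ξ * (c ^ k)⁻¹`
-- approximates `α` to order at least `p ^ n`.
lemma mem_adicClosure_of_pow_eq {p : ℕ} [Fact p.Prime] [CharP K p] (hpq : ¬p ∣ q)
    (hα : α ^ q = algebraMap K L c) {ξ : K} (hξ : ξ ^ q = 1)
    (hαξ : 0 < u.ord (α - algebraMap K L ξ)) : α ∈ u.adicClosure K := by
  have hp : p.Prime := Fact.out
  have hq : 0 < q := Nat.pos_of_ne_zero fun hq ↦ hpq (hq ▸ dvd_zero p)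
  have := charP_of_injective_algebraMap (algebraMap K L).injective p
  have hξL : algebraMap K L ξ ^ q = 1 := by rw [← map_pow, hξ, map_one]
  have hα0 : u.ord α = 0 := by
    rw [← ord_eq_zero_of_pow_eq_one (v := u) hq hξL] at hαξ ⊢
    exact u.addValuation.map_eq_of_lt_sub hαξ
  have hα_ne : α ≠ 0 := by
    rintro rfl
    simp [u.ord_zero] at hα0
  intro N
  obtain ⟨n, k, hNn, hnk⟩ :=
    exists_le_pow_eq_one_add_mul hp.one_lt hq (hp.coprime_iff_not_dvd.2 hpq) N.toNat
  have hsub : α - algebraMap K L (ξ * (c ^ k)⁻¹) =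
      (α - algebraMap K L ξ) ^ p ^ n * ((α ^ q) ^ k)⁻¹ := by
    rw [sub_pow_char_pow_of_pow_eq_one hξL hnk, map_mul, map_inv₀, map_pow, ← hα]
    field_simp
  refine ⟨ξ * (c ^ k)⁻¹, ?_⟩
  rw [hsub, u.ord_mul, ord_inv, ord_pow _ (α ^ q), ord_pow _ α, hα0, nsmul_zero, nsmul_zero,
    neg_zero, add_zero, ord_pow]
  calc (N : WithTop ℤ) ≤ ↑(p ^ n • (1 : ℤ)) := by
        rw [WithTop.coe_le_coe, nsmul_one]
        exact (Int.self_le_toNat N).trans (by exact_mod_cast hNn)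
    _ ≤ p ^ n • u.ord (α - algebraMap K L ξ) :=
        nsmul_le_nsmul_right (withTop_one_le_of_pos hαξ) _

lemma adicClosure_eq_top_of_ord_sub_one_pos {p : ℕ} [Fact p.Prime] [CharP K p] {ζ : K}
    (hζ : IsPrimitiveRoot ζ q) (hq : 0 < q) (hα : α ^ q = algebraMap K L c)
    (hgen : IntermediateField.adjoin K {α} = ⊤) (h : u.LiesOver v (algebraMap K L))
    (hc : 0 < v.ord (c - 1)) : u.adicClosure K = ⊤ := by
  have := NeZero.of_pos hq
  have hpq : ¬p ∣ q := by
    rw [← CharP.cast_eq_zero_iff K]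
    exact hζ.neZero'.ne
  have hα1 : 0 < u.ord (α ^ q - 1) := by
    rwa [hα, ← map_one (algebraMap K L), ← map_sub, h.ord_pos_iff]
  obtain ⟨ξ, hξ, hαξ⟩ := exists_pow_eq_one_ord_sub_pos hζ hq hα1
  exact adicClosure_eq_top_of_mem (isAlgebraic_of_pow_eq hq hα) hgen
    (mem_adicClosure_of_pow_eq hpq hα hξ hαξ)

end AdicClosure

section OrdDvd

variable {q : ℕ} {a w α : K}

lemma ordDvd_inv_iff : v.OrdDvd q a⁻¹ ↔ v.OrdDvd q a := by
  suffices h : ∀ a, v.OrdDvd q a → v.OrdDvd q a⁻¹ from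
    ⟨fun ha ↦ inv_inv a ▸ h _ ha, h a⟩
  rintro a ⟨n, hn⟩
  exact ⟨-n, by rw [ord_inv, hn, mul_neg]; rfl⟩

lemma OrdDvd.pow_mul (hw : v.OrdDvd q w) (hα : α ≠ 0) : v.OrdDvd q (α ^ q * w) := by
  obtain ⟨n, hn⟩ := hw
  obtain ⟨m, hm⟩ := WithTop.ne_top_iff_exists.1 (v.ord_ne_top α hα)
  refine ⟨m + n, ?_⟩
  rw [v.ord_mul, ord_pow, hn, ← hm, ← WithTop.coe_nsmul, ← WithTop.coe_add, nsmul_eq_mul, mul_add]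

lemma ordDvd_of_ord_neg (hq : 0 < q) (hw : 0 ≤ v.ord w) (hdvd : v.OrdDvd q w)
    (hα : α ^ q * w = w + (a + a⁻¹)) (ha : v.ord a < 0) : v.OrdDvd q a := by
  have ha0 : a ≠ 0 := by
    rintro rfl
    simp [v.ord_zero] at ha
  have hrest : v.ord a < v.ord (a⁻¹ + w) :=
    ha.trans_le (v.addValuation.map_le_add ((ord_inv_pos_iff ha0).2 ha).le hw)
  have hord : v.ord (α ^ q * w) = v.ord a := by
    rw [hα, add_comm, add_assoc]
    exact v.addValuation.map_add_eq_of_lt_left hrest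
  have hα0 : α ≠ 0 := by
    rintro rfl
    refine v.ord_ne_top a ha0 ?_
    rw [← hord, v.ord_mul, ord_pow, v.ord_zero, nsmul_top hq, top_add]
  obtain ⟨n, hn⟩ := hdvd.pow_mul hα0
  exact ⟨n, hord.symm.trans hn⟩

lemma ordDvd_of_pow_mul_eq (hq : 0 < q) (hdiv : v.ord a ≠ 0 → 0 ≤ v.ord w ∧ v.OrdDvd q w)
    (hα : α ^ q * w = w + (a + a⁻¹)) (ha : a ≠ 0) : v.OrdDvd q a := by
  obtain hneg | hzero | hpos := lt_trichotomy (v.ord a) 0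
  · exact ordDvd_of_ord_neg hq (hdiv hneg.ne).1 (hdiv hneg.ne).2 hα hneg
  · exact ⟨0, by rw [hzero, mul_zero]; rfl⟩
  · rw [← ordDvd_inv_iff]
    exact ordDvd_of_ord_neg hq (hdiv hpos.ne').1 (hdiv hpos.ne').2
      (by rwa [inv_inv, add_comm a⁻¹]) ((ord_inv_neg_iff ha).2 hpos)

lemma ord_add_inv_mul_inv_pos (ha : v.ord a = 0) (hw : v.ord w < 0) :
    0 < v.ord ((a + a⁻¹) * w⁻¹) := by
  have hw0 : w ≠ 0 := by
    rintro rfl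
    simp [v.ord_zero] at hw
  have ha_inv : 0 ≤ v.ord a⁻¹ := by
    rw [ord_inv, ha]
    rfl
  have hsum : 0 ≤ v.ord (a + a⁻¹) := v.addValuation.map_le_add ha.ge ha_inv
  rw [v.ord_mul]
  exact ((ord_inv_pos_iff hw0).2 hw).trans_le (le_add_of_nonneg_left hsum)

end OrdDvd

end FFPrime

open FFPrime in
theorem statement16_general {p q : ℕ} [Fact p.Prime] (hq : 0 < q)
    {K : Type} [Field K] [CharP K p] {ζ : K} (hζ : IsPrimitiveRoot ζ q)
    {a w : K} (ha : a ≠ 0) (hw : w ≠ 0)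
    (hdiv : ∀ v : FFPrime K, v.ord a ≠ 0 → 0 ≤ v.ord w ∧ v.OrdDvd q w)
    {M : Type} [Field M] [Algebra K M] {α : M}
    (hα : α ^ q = algebraMap K M (1 + (a + a⁻¹) * w⁻¹))
    (hgen : IntermediateField.adjoin K {α} = ⊤) :
    (∀ v : FFPrime K, Finite (IsLocalRing.ResidueField v.valuationSubring) → v.ord w < 0 →
      v.SplitsCompletely (algebraMap K M) ∧
      ∀ u : FFPrime M, u.LiesOver v (algebraMap K M) →
        ∀ x, u.ord (algebraMap K M x) = v.ord x) ∧
    (∀ u : FFPrime M, u.OrdDvd q (algebraMap K M a)) := by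
  have : Algebra.IsAlgebraic K M :=
    isAlgebraic_of_adjoin_simple_eq_top (isAlgebraic_of_pow_eq hq hα) hgen
  refine ⟨fun v _ hvw ↦ ?_, fun u ↦ ?_⟩
  · have hva : v.ord a = 0 := by_contra fun hva ↦ (hdiv v hva).1.not_gt hvw
    have hc : 0 < v.ord (1 + (a + a⁻¹) * w⁻¹ - 1) := by
      rw [add_sub_cancel_left]
      exact ord_add_inv_mul_inv_pos hva hvw
    have hdense (u : FFPrime M) (h : u.LiesOver v (algebraMap K M)) : u.adicClosure K = ⊤ :=
      adicClosure_eq_top_of_ord_sub_one_pos (p := p) hζ hq hα hgen h hc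
    exact ⟨splitsCompletely_of_adicClosure_eq_top hdense,
      fun u h ↦ h.ord_map_of_adicClosure_eq_top (hdense u h)⟩
  · obtain ⟨v, h⟩ := u.exists_liesOver (K := K)
    have hα_mul : α ^ q * algebraMap K M w =
        algebraMap K M w + (algebraMap K M a + (algebraMap K M a)⁻¹) := by
      rw [hα, ← map_inv₀, ← map_add, ← map_add, ← map_mul, add_mul, one_mul,
        inv_mul_cancel_right₀ hw]
    refine ordDvd_of_pow_mul_eq hq (fun hua ↦ ?_) hα_mul ((map_ne_zero _).2 ha)
    have hvw := hdiv v (h.ord_eq_zero_iff.not.1 hua)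
    exact ⟨h.ord_nonneg_iff.2 hvw.1, h.ordDvd_map hvw.2⟩

/-- Behavior of primes in `L = K((1+(a+a⁻¹)w⁻¹)^{1/q})`, where every
prime occurring in the divisor of `a` has `ord w ≥ 0` and `ord w ≡ 0 mod q`:
(a) any prime `𝔭` of `K` with `ord_𝔭 w < 0` and `ord_𝔭 w ≢ 0 mod q` splits completely,
and the same order conditions hold at every prime above it; (b) at every prime of `L`,
the order of `a` is `≡ 0 mod q`. -/
theorem statement16 (p q : ℕ) [Fact p.Prime] (hq : q.Prime) (hqp : q ≠ p)
    (K : Type) [Field K] [Algebra (RatFunc (ZMod p)) K]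
    [FiniteDimensional (RatFunc (ZMod p)) K]
    (ζ : K) (hζ : IsPrimitiveRoot ζ q)
    (a w : K) (ha : a ≠ 0) (hw : w ≠ 0)
    (hnz : 1 + (a + a⁻¹) * w⁻¹ ≠ 0)
    (hdiv : ∀ v : FFPrime K, v.ord a ≠ 0 → 0 ≤ v.ord w ∧ v.OrdDvd q w)
    (M : Type) [Field M] [Algebra K M] (α : M)
    (hα : α ^ q = algebraMap K M (1 + (a + a⁻¹) * w⁻¹))
    (hgen : IntermediateField.adjoin K {α} = ⊤) :
    (∀ v : FFPrime K, v.ord w < 0 → ¬ v.OrdDvd q w →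
      v.SplitsCompletely (algebraMap K M) ∧
      ∀ u : FFPrime M, u.LiesOver v (algebraMap K M) →
        u.ord (algebraMap K M w) < 0 ∧ ¬ u.OrdDvd q (algebraMap K M w)) ∧
    (∀ u : FFPrime M, u.OrdDvd q (algebraMap K M a)) := by
  have : CharP K p := charP_of_injective_algebraMap (algebraMap (RatFunc (ZMod p)) K).injective p
  obtain ⟨hsplit, hdvd⟩ := statement16_general (p := p) hq.pos hζ ha hw hdiv hα hgen
  refine ⟨fun v hvw hndvd ↦ ?_, hdvd⟩
  obtain ⟨hv, hord⟩ := hsplit v (v.finite_residueField (k := ZMod p)) hvw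
  exact ⟨hv, fun u hu ↦ by simpa only [FFPrime.OrdDvd, hord u hu w] using ⟨hvw, hndvd⟩⟩
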